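/- arXiv:2007.07473 — 2 statements merged into one kernel-verified Lean document; each statement's English description precedes it below -/
import Mathlib

section
/- For Re(s) < 1, the Laplace transform of t times the LUE density satisfies ∫_0^∞ t ρ_{(1)}^{(L)}(t) e^{st} dt = (N(N+a)/(1-s)^{2N+a}) ₂F₁(-N+1-a, -N+1, 2; s²). -/
open Real MeasureTheory Finset

/-- Generalized Laguerre polynomial via the Rodrigues formula. -/
noncomputable def lagL (a : ℝ) (n : ℕ) (x : ℝ) : ℝ :=
  x ^ (-a) * Real.exp x / (n.factorial : ℝ) *
    iteratedDeriv n (fun t : ℝ => Real.exp (-t) * t ^ ((n : ℝ) + a)) x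

/-- Laguerre orthogonal function `ψ_n^{(L)}`. -/
noncomputable def psiL (a : ℝ) (n : ℕ) (x : ℝ) : ℝ :=
  Real.sqrt (x ^ a * Real.exp (-x)) * ((n.factorial : ℝ) * (-1) ^ n * lagL a n x)

/-- Laguerre norm `h_n^{(L)} = Γ(n+1)Γ(n+a+1)`. -/
noncomputable def hL (a : ℝ) (n : ℕ) : ℝ := Real.Gamma (n + 1) * Real.Gamma (n + a + 1)

/-- Eigenvalue density of the LUE (diagonal Christoffel–Darboux kernel). -/
noncomputable def rhoLUE (a : ℝ) (N : ℕ) (t : ℝ) : ℝ :=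
  ∑ j ∈ Finset.range N, psiL a j t ^ 2 / hL a j

/-- Rising factorial (Pochhammer symbol) `(c)_n` for a real `c`. -/
noncomputable def poch (c : ℝ) (n : ℕ) : ℝ := ∏ i ∈ Finset.range n, (c + i)

/-- Terminating Gauss hypergeometric polynomial `₂F₁(-n, b, c; z)`. -/
noncomputable def hypF (n : ℕ) (b c z : ℝ) : ℝ :=
  ∑ m ∈ Finset.range (n + 1),
    poch (-(n : ℝ)) m * poch b m / (poch c m * (m.factorial : ℝ)) * z ^ m

/-!
The proof rests on a telescoping sum. Up to a constant the Laguerre polynomial is the image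
of `(1 - X) ^ n` under the Borel transform `X ^ k ↦ X ^ k / Γ(a + k + 1)`, so the binomial theorem
expands its dilation `X ↦ X / p` in Laguerre polynomials, and orthogonality gives
`∫ t ^ a e ^ (-p t) p_n(t) ^ 2 dt = p ^ (-(2 n + a + 1)) q_n((1 - p) ^ 2)`
for the orthonormal polynomials `p_n`, where `q_n(z) = ∑ m, C(n, m) C(n + a, m) z ^ m`.
Differentiation in `p` inserts the factor `t`. By the recursion
`q_(n+1)' = (2 n + a + 1) q_n + (1 - z) q_n'`, the result is the difference of
`p ^ (-(2 n + a)) q_n'((1 - p) ^ 2)` at `n + 1` and at `n`, and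
`q_N'(z) = N (N + a) ₂F₁(-N + 1, -N + 1 - a; 2; z)`.
-/

open Polynomial

section BinomialRing

variable {R : Type*} [CommRing R] [BinomialRing R]

theorem succ_mul_ringChoose_succ (x : R) (m : ℕ) :
    (m + 1) * Ring.choose x (m + 1) = (x - m) * Ring.choose x m := by
  have h := Ring.choose_smul_choose x m.le_succ
  simpa [mul_comm (x - m)] using h

theorem succ_mul_ringChoose_add_one_succ (x : R) (m : ℕ) :
    (m + 1) * Ring.choose (x + 1) (m + 1) = (x + 1) * Ring.choose x m := by
  rw [Ring.choose_succ_succ]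
  linear_combination succ_mul_ringChoose_succ x m

theorem descPochhammer_eval_eq_factorial_mul_ringChoose (x : R) (m : ℕ) :
    (descPochhammer R m).eval x = m.factorial * Ring.choose x m := by
  induction m with
  | zero => simp
  | succ m ih =>
    rw [descPochhammer_succ_eval, ih, Nat.factorial_succ]
    push_cast
    linear_combination -(m.factorial : R) * succ_mul_ringChoose_succ x m

/-- The polynomial `₂F₁(-n, -x; 1; X)`, whose coefficients are products of binomial coefficients. -/
noncomputable def binomialProductPoly (n : ℕ) (x : R) : R[X] :=
  ∑ m ∈ range (n + 1), monomial m (n.choose m * Ring.choose x m)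

theorem coeff_binomialProductPoly (n m : ℕ) (x : R) :
    (binomialProductPoly n x).coeff m = n.choose m * Ring.choose x m := by
  simp only [binomialProductPoly, finsetSum_coeff, coeff_monomial, sum_ite_eq', mem_range,
    Nat.lt_succ_iff, ite_eq_left_iff, not_le]
  intro hm
  simp [Nat.choose_eq_zero_of_lt hm]

theorem derivative_binomialProductPoly_succ (n : ℕ) (x : R) :
    derivative (binomialProductPoly (n + 1) (x + 1)) =
      C (n + x + 1) * binomialProductPoly n x +
        (1 - X) * derivative (binomialProductPoly n x) := by
  ext m
  have hX : (X * derivative (binomialProductPoly n x)).coeff m =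
      m * (n.choose m * Ring.choose x m) := by
    cases m with
    | zero => simp
    | succ m => simp [coeff_derivative, coeff_binomialProductPoly, mul_comm]
  have hn := succ_mul_ringChoose_succ (n : R) m
  have hx := succ_mul_ringChoose_succ x m
  rw [Ring.choose_natCast, Ring.choose_natCast] at hn
  rw [sub_mul, one_mul, coeff_add, coeff_C_mul, coeff_sub, hX]
  simp only [coeff_derivative, coeff_binomialProductPoly, Nat.choose_succ_succ,
    Ring.choose_succ_succ]
  push_cast
  linear_combination Ring.choose x m * hn + n.choose m * hx

end BinomialRing

theorem poch_succ (c : ℝ) (m : ℕ) : poch c (m + 1) = poch c m * (c + m) :=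
  prod_range_succ _ _

theorem poch_two (m : ℕ) : poch 2 m = (m + 1).factorial := by
  induction m with
  | zero => simp [poch]
  | succ m ih =>
    rw [poch_succ, ih, Nat.factorial_succ (m + 1)]
    push_cast
    ring

theorem mul_poch_one_sub (x : ℝ) (m : ℕ) :
    x * poch (1 - x) m = (-1) ^ m * ((m + 1).factorial * Ring.choose x (m + 1)) := by
  induction m with
  | zero => simp [poch]
  | succ m ih =>
    have h := succ_mul_ringChoose_succ x (m + 1)
    rw [poch_succ, ← mul_assoc, ih, Nat.factorial_succ (m + 1), pow_succ]
    push_cast at h ⊢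
    linear_combination (-1) ^ m * (m + 1).factorial * h

theorem eval_derivative_binomialProductPoly_succ (n : ℕ) (x z : ℝ) :
    (derivative (binomialProductPoly (n + 1) x)).eval z =
      (n + 1) * x * hypF n (1 - x) 2 z := by
  have hdeg : (derivative (binomialProductPoly (n + 1) x)).natDegree < n + 1 := by
    rw [Nat.lt_succ_iff, natDegree_le_iff_coeff_eq_zero]
    intro m hm
    simp [coeff_derivative, coeff_binomialProductPoly,
      Nat.choose_eq_zero_of_lt (Nat.succ_lt_succ hm)]
  rw [eval_eq_sum_range' hdeg, hypF, mul_sum]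
  refine sum_congr rfl fun m _ => ?_
  have hn := mul_poch_one_sub ((n : ℝ) + 1) m
  have hx := mul_poch_one_sub x m
  have hsign : ((-1 : ℝ) ^ m) ^ 2 = 1 := by simp [← pow_mul']
  rw [show (1 : ℝ) - (n + 1) = -n by ring, ← Nat.cast_succ, Ring.choose_natCast] at hn
  have hprod : ((n : ℝ) + 1) * x * (poch (-n) m * poch (1 - x) m) =
      (m + 1).factorial ^ 2 * ((n + 1).choose (m + 1) * Ring.choose x (m + 1)) := by
    push_cast at hn
    linear_combination x * poch (1 - x) m * hn +
      (-1) ^ m * ((m + 1).factorial * (n + 1).choose (m + 1)) * hx +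
      (m + 1).factorial ^ 2 * ((n + 1).choose (m + 1) * Ring.choose x (m + 1)) * hsign
  rw [coeff_derivative, coeff_binomialProductPoly, poch_two]
  calc _ = (m + 1).factorial ^ 2 * ((n + 1).choose (m + 1) * Ring.choose x (m + 1)) /
        ((m + 1).factorial * m.factorial) * z ^ m := by
        rw [Nat.factorial_succ]
        push_cast
        field_simp
    _ = _ := by
        rw [← hprod]
        ring

section Laguerre

variable {a p : ℝ}

theorem Gamma_add_natCast_add_one_pos (ha : -1 < a) (k : ℕ) : 0 < Gamma (a + k + 1) :=
  Gamma_pos_of_pos (by linarith [(Nat.cast_nonneg k : (0 : ℝ) ≤ k)])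

theorem Gamma_add_natCast_add_one_eq (ha : -1 < a) (m : ℕ) :
    Gamma (a + m + 1) = Gamma (a + 1) * (m.factorial * Ring.choose (a + m) m) := by
  induction m with
  | zero => simp
  | succ m ih =>
    have h := succ_mul_ringChoose_add_one_succ (a + m) m
    have hpos : a + m + 1 ≠ 0 := by linarith [(Nat.cast_nonneg m : (0 : ℝ) ≤ m)]
    rw [Nat.factorial_succ]
    push_cast
    rw [← add_assoc, Gamma_add_one hpos, ih]
    linear_combination -Gamma (a + 1) * m.factorial * h

/-- The functional `P ↦ ∫₀^∞ t ^ a e ^ (-p t) P(t) dt` on polynomials. It is defined by its moments,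
which makes its dependence on `p` explicit. -/
noncomputable def laplaceFunctional (a p : ℝ) : ℝ[X] →ₗ[ℝ] ℝ :=
  lsum fun k => (Gamma (a + k + 1) * p ^ (-(a + k + 1))) • LinearMap.id

@[simp]
theorem laplaceFunctional_monomial (a p c : ℝ) (k : ℕ) :
    laplaceFunctional a p (monomial k c) = Gamma (a + k + 1) * p ^ (-(a + k + 1)) * c := by
  simp [laplaceFunctional]

theorem rpow_mul_exp_mul_eval_monomial (a p c : ℝ) (k : ℕ) {t : ℝ} (ht : 0 < t) :
    t ^ a * exp (-(p * t)) * (monomial k c).eval t =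
      c * (t ^ (a + k + 1 - 1) * exp (-(p * t))) := by
  rw [eval_monomial, add_sub_cancel_right, rpow_add ht, rpow_natCast]
  ring

theorem integrableOn_rpow_mul_exp_mul_eval (ha : -1 < a) (hp : 0 < p) (P : ℝ[X]) :
    IntegrableOn (fun t => t ^ a * exp (-(p * t)) * P.eval t) (Set.Ioi 0) := by
  induction P using Polynomial.induction_on' with
  | add P Q hP hQ =>
    simp only [eval_add, mul_add]
    exact hP.add hQ
  | monomial k c =>
    have hk : -1 < a + k := by linarith [(Nat.cast_nonneg k : (0 : ℝ) ≤ k)]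
    have h := integrableOn_rpow_mul_exp_neg_mul_rpow hk one_pos hp
    simp only [rpow_one, neg_mul] at h
    refine IntegrableOn.congr_fun (Integrable.const_mul h c) (fun t ht => ?_) measurableSet_Ioi
    rw [rpow_mul_exp_mul_eval_monomial a p c k ht, add_sub_cancel_right]

theorem integral_rpow_mul_exp_mul_eval (ha : -1 < a) (hp : 0 < p) (P : ℝ[X]) :
    ∫ t in Set.Ioi 0, t ^ a * exp (-(p * t)) * P.eval t = laplaceFunctional a p P := by
  induction P using Polynomial.induction_on' with
  | add P Q hP hQ =>
    simp only [eval_add, mul_add, map_add]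
    rw [integral_add (integrableOn_rpow_mul_exp_mul_eval ha hp P)
      (integrableOn_rpow_mul_exp_mul_eval ha hp Q), hP, hQ]
  | monomial k c =>
    have hk : 0 < a + k + 1 := by linarith [(Nat.cast_nonneg k : (0 : ℝ) ≤ k)]
    rw [setIntegral_congr_fun measurableSet_Ioi fun t ht =>
        rpow_mul_exp_mul_eval_monomial a p c k ht,
      integral_const_mul, integral_rpow_mul_exp_neg_mul_Ioi hk hp, laplaceFunctional_monomial,
      one_div, inv_rpow hp.le, rpow_neg hp.le]
    ring

theorem hasDerivAt_laplaceFunctional (ha : -1 < a) (hp : 0 < p) (P : ℝ[X]) :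
    HasDerivAt (fun p => laplaceFunctional a p P) (-laplaceFunctional a p (X * P)) p := by
  induction P using Polynomial.induction_on' with
  | add P Q hP hQ =>
    simp only [mul_add, map_add, neg_add]
    exact hP.add hQ
  | monomial k c =>
    have hk : a + k + 1 ≠ 0 := by linarith [(Nat.cast_nonneg k : (0 : ℝ) ≤ k)]
    simp only [X_mul_monomial, laplaceFunctional_monomial]
    refine (((hasDerivAt_rpow_const (Or.inl hp.ne')).const_mul _).mul_const c).congr_deriv ?_
    push_cast
    rw [← add_assoc, Gamma_add_one hk, neg_add (a + k + 1) 1, ← sub_eq_add_neg]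
    ring

theorem laplaceFunctional_eq_rpow_mul_comp (a : ℝ) (hp : 0 < p) (P : ℝ[X]) :
    laplaceFunctional a p P = p ^ (-(a + 1)) * laplaceFunctional a 1 (P.comp (C p⁻¹ * X)) := by
  induction P using Polynomial.induction_on' with
  | add P Q hP hQ => simp only [add_comp, map_add, hP, hQ, mul_add]
  | monomial k c =>
    have hcomp : (monomial k c).comp (C p⁻¹ * X) = monomial k (c * p⁻¹ ^ k) := by
      rw [monomial_comp, mul_pow, ← C_pow, ← mul_assoc, ← C_mul, C_mul_X_pow_eq_monomial]
    rw [hcomp, laplaceFunctional_monomial, laplaceFunctional_monomial, one_rpow,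
      show -(a + k + 1) = -(a + 1) - k by ring, rpow_sub hp, rpow_natCast, inv_pow]
    ring

/-- The linear map `X ^ k ↦ X ^ k / Γ(a + k + 1)`. It sends `P` to the polynomial
whose Laplace transform with weight `t ^ a` is `p ^ (-(a + 1)) P(1 / p)`. -/
noncomputable def borelTransform (a : ℝ) : ℝ[X] →ₗ[ℝ] ℝ[X] :=
  lsum fun k => (Gamma (a + k + 1))⁻¹ • monomial k

@[simp]
theorem borelTransform_monomial (a c : ℝ) (k : ℕ) :
    borelTransform a (monomial k c) = monomial k ((Gamma (a + k + 1))⁻¹ * c) := by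
  simp [borelTransform, smul_monomial]

theorem coeff_borelTransform (a : ℝ) (P : ℝ[X]) (k : ℕ) :
    (borelTransform a P).coeff k = (Gamma (a + k + 1))⁻¹ * P.coeff k := by
  induction P using Polynomial.induction_on' with
  | add P Q hP hQ => simp only [map_add, coeff_add, hP, hQ, mul_add]
  | monomial m c =>
    rw [borelTransform_monomial, coeff_monomial, coeff_monomial]
    split_ifs with h
    · rw [h]
    · rw [mul_zero]

theorem borelTransform_comp_C_mul_X (a c : ℝ) (P : ℝ[X]) :
    borelTransform a (P.comp (C c * X)) = (borelTransform a P).comp (C c * X) := by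
  ext k
  simp only [coeff_borelTransform, comp_C_mul_X_coeff, mul_assoc]

theorem laplaceFunctional_one_borelTransform (ha : -1 < a) (P : ℝ[X]) :
    laplaceFunctional a 1 (borelTransform a P) = P.eval 1 := by
  induction P using Polynomial.induction_on' with
  | add P Q hP hQ => simp only [map_add, eval_add, hP, hQ]
  | monomial k c =>
    have hΓ := (Gamma_add_natCast_add_one_pos ha k).ne'
    simp [hΓ]

theorem laplaceFunctional_one_X_pow_succ_mul_borelTransform (ha : -1 < a) (j : ℕ) (P : ℝ[X]) :
    laplaceFunctional a 1 (X ^ (j + 1) * borelTransform a P) =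
      laplaceFunctional a 1 (X ^ j * borelTransform a ((a + j + 1) • P + X * derivative P)) := by
  induction P using Polynomial.induction_on' with
  | add P Q hP hQ =>
    simp only [map_add, smul_add, mul_add] at hP hQ ⊢
    linarith
  | monomial k c =>
    have hXD : X * derivative (monomial k c) = monomial k (k * c) := by
      cases k <;> simp [mul_comm]
    have hk : a + (k + j) + 1 ≠ 0 := by
      linarith [(Nat.cast_nonneg k : (0 : ℝ) ≤ k), (Nat.cast_nonneg j : (0 : ℝ) ≤ j)]
    rw [hXD, smul_monomial, ← map_add]
    simp only [borelTransform_monomial, X_pow_mul_monomial, laplaceFunctional_monomial, one_rpow]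
    push_cast
    rw [← add_assoc (k : ℝ), ← add_assoc a, Gamma_add_one hk, smul_eq_mul]
    ring

/-- The Laguerre polynomial `L_n^(a)` divided by `Γ(n + a + 1) / n!`, a normalization in which it is
the Borel transform of `(1 - X) ^ n`. -/
noncomputable def scaledLaguerre (a : ℝ) (n : ℕ) : ℝ[X] :=
  borelTransform a ((1 - X) ^ n)

theorem coeff_scaledLaguerre (a : ℝ) (n k : ℕ) :
    (scaledLaguerre a n).coeff k = (Gamma (a + k + 1))⁻¹ * ((-1) ^ k * n.choose k) := by
  have hcomp : (1 - X : ℝ[X]) ^ n = ((1 + X) ^ n).comp (C (-1) * X) := by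
    simp [sub_eq_add_neg]
  rw [scaledLaguerre, coeff_borelTransform, hcomp, comp_C_mul_X_coeff, coeff_one_add_X_pow,
    mul_comm (n.choose k : ℝ)]

theorem natDegree_scaledLaguerre_le (a : ℝ) (n : ℕ) : (scaledLaguerre a n).natDegree ≤ n := by
  rw [natDegree_le_iff_coeff_eq_zero]
  intro k hk
  simp [coeff_scaledLaguerre, Nat.choose_eq_zero_of_lt hk]

theorem scaledLaguerre_comp_C_mul_X (a c : ℝ) (n : ℕ) :
    (scaledLaguerre a n).comp (C c * X) =
      ∑ k ∈ range (n + 1), (c ^ k * (1 - c) ^ (n - k) * n.choose k) • scaledLaguerre a k := by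
  have hsplit : ((1 - X : ℝ[X]) ^ n).comp (C c * X) = (C c * (1 - X) + C (1 - c)) ^ n := by
    simp only [pow_comp, sub_comp, one_comp, X_comp, C_sub, C_1]
    ring
  rw [scaledLaguerre, ← borelTransform_comp_C_mul_X, hsplit, add_pow, map_sum]
  refine sum_congr rfl fun k _ => ?_
  rw [scaledLaguerre, ← map_smul, smul_eq_C_mul]
  congr 1
  simp only [mul_pow, C_mul, C_pow, C_eq_natCast]
  ring

theorem laplaceFunctional_one_X_pow_mul_borelTransform (ha : -1 < a) (j : ℕ) (P : ℝ[X]) :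
    laplaceFunctional a 1 (X ^ j * borelTransform a ((1 - X) ^ j * P)) =
      (-1) ^ j * j.factorial * P.eval 1 := by
  induction j generalizing P with
  | zero => simp [laplaceFunctional_one_borelTransform ha]
  | succ j ih =>
    have hfactor : (a + j + 1 : ℝ) • ((1 - X) ^ (j + 1) * P) +
        X * derivative ((1 - X) ^ (j + 1) * P) =
        (1 - X) ^ j *
          ((1 - X) * ((a + j + 1 : ℝ) • P + X * derivative P) - (j + 1 : ℝ[X]) * X * P) := by
      simp only [derivative_mul, derivative_pow_succ, derivative_sub, derivative_one, derivative_X,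
        smul_eq_C_mul, map_add, map_natCast, map_one]
      ring
    rw [laplaceFunctional_one_X_pow_succ_mul_borelTransform ha, hfactor, ih, Nat.factorial_succ]
    simp only [eval_sub, eval_mul, eval_add, eval_one, eval_X, eval_natCast, sub_self, zero_mul,
      zero_sub, mul_one]
    push_cast
    ring

theorem laplaceFunctional_one_mul_scaledLaguerre (ha : -1 < a) {n : ℕ} {Q : ℝ[X]}
    (hQ : Q.natDegree ≤ n) :
    laplaceFunctional a 1 (Q * scaledLaguerre a n) = (-1) ^ n * n.factorial * Q.coeff n := by
  have hpow (j : ℕ) (hj : j ≤ n) : laplaceFunctional a 1 (X ^ j * scaledLaguerre a n) =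
      (-1) ^ j * j.factorial * 0 ^ (n - j) := by
    rw [scaledLaguerre, ← Nat.add_sub_of_le hj, pow_add,
      laplaceFunctional_one_X_pow_mul_borelTransform ha]
    simp
  conv_lhs => rw [Q.as_sum_range_C_mul_X_pow' (Nat.lt_succ_of_le hQ), sum_mul, map_sum]
  simp only [← smul_eq_C_mul, smul_mul_assoc, map_smul]
  rw [sum_range_succ, hpow n le_rfl, sum_eq_zero]
  · rw [Nat.sub_self, pow_zero, zero_add, smul_eq_mul]
    ring
  · intro j hj
    rw [hpow j (mem_range.1 hj).le, zero_pow (Nat.sub_ne_zero_of_lt (mem_range.1 hj)), mul_zero,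
      smul_zero]

theorem laplaceFunctional_one_scaledLaguerre_mul_of_lt (ha : -1 < a) {m n : ℕ} (hmn : m < n) :
    laplaceFunctional a 1 (scaledLaguerre a m * scaledLaguerre a n) = 0 := by
  have hdeg := natDegree_scaledLaguerre_le a m
  rw [laplaceFunctional_one_mul_scaledLaguerre ha (hdeg.trans hmn.le),
    coeff_eq_zero_of_natDegree_lt (hdeg.trans_lt hmn), mul_zero]

theorem laplaceFunctional_one_scaledLaguerre_mul (ha : -1 < a) (m n : ℕ) :
    laplaceFunctional a 1 (scaledLaguerre a m * scaledLaguerre a n) =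
      if m = n then n.factorial / Gamma (a + n + 1) else 0 := by
  rcases lt_trichotomy m n with hmn | rfl | hmn
  · rw [laplaceFunctional_one_scaledLaguerre_mul_of_lt ha hmn, if_neg hmn.ne]
  · have hsign : ((-1 : ℝ) ^ m) ^ 2 = 1 := by simp [← pow_mul']
    rw [laplaceFunctional_one_mul_scaledLaguerre ha (natDegree_scaledLaguerre_le a m),
      coeff_scaledLaguerre, if_pos rfl, Nat.choose_self, Nat.cast_one]
    linear_combination m.factorial * (Gamma (a + m + 1))⁻¹ * hsign
  · rw [mul_comm, laplaceFunctional_one_scaledLaguerre_mul_of_lt ha hmn, if_neg hmn.ne']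

theorem laplaceFunctional_one_sum_smul_scaledLaguerre_sq (ha : -1 < a) (s : Finset ℕ)
    (c : ℕ → ℝ) :
    laplaceFunctional a 1 ((∑ k ∈ s, c k • scaledLaguerre a k) ^ 2) =
      ∑ k ∈ s, c k ^ 2 * (k.factorial / Gamma (a + k + 1)) := by
  simp only [sq, sum_mul_sum, map_sum, smul_mul_smul_comm, map_smul, smul_eq_mul,
    laplaceFunctional_one_scaledLaguerre_mul ha, mul_ite, mul_zero, sum_ite_eq]
  exact sum_congr rfl fun k hk => if_pos hk

theorem laguerre_norm_mul_choose_sq (ha : -1 < a) {m n : ℕ} (hmn : m ≤ n) :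
    Gamma (n + a + 1) / n.factorial *
        (n.choose m ^ 2 * ((n - m).factorial / Gamma (a + (n - m : ℕ) + 1))) =
      n.choose m * Ring.choose (n + a) m := by
  obtain ⟨k, rfl⟩ := Nat.exists_eq_add_of_le' hmn
  have hk : -1 < a + k := by linarith [(Nat.cast_nonneg k : (0 : ℝ) ≤ k)]
  have hΓ := (Gamma_add_natCast_add_one_pos ha k).ne'
  have hfact : ((k + m).factorial : ℝ) = (k + m).choose m * m.factorial * k.factorial := by
    rw [← Nat.choose_mul_factorial_mul_factorial hmn, Nat.add_sub_cancel]
    push_cast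
    ring
  have hchoose : ((k + m).choose m : ℝ) ≠ 0 := by exact_mod_cast (Nat.choose_pos hmn).ne'
  rw [Nat.add_sub_cancel, show ((k + m : ℕ) : ℝ) + a = a + k + m by push_cast; ring,
    Gamma_add_natCast_add_one_eq hk, hfact]
  field_simp

theorem laplaceFunctional_scaledLaguerre_sq (ha : -1 < a) (hp : 0 < p) (n : ℕ) :
    Gamma (n + a + 1) / n.factorial * laplaceFunctional a p (scaledLaguerre a n ^ 2) =
      p ^ (-(2 * n + a + 1)) * (binomialProductPoly n (n + a)).eval ((1 - p) ^ 2) := by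
  have hexp : p ^ (-(2 * n + a + 1)) = p ^ (-(a + 1)) * (p⁻¹ ^ n) ^ 2 := by
    rw [show -(2 * n + a + 1) = -(a + 1) - (2 * n : ℕ) by push_cast; ring, rpow_sub hp,
      rpow_natCast, pow_mul', inv_pow, inv_pow, div_eq_mul_inv]
  have hsum : Gamma (n + a + 1) / n.factorial * ∑ k ∈ range (n + 1),
      (p⁻¹ ^ k * (1 - p⁻¹) ^ (n - k) * n.choose k) ^ 2 * (k.factorial / Gamma (a + k + 1)) =
      (p⁻¹ ^ n) ^ 2 * (binomialProductPoly n (n + a)).eval ((1 - p) ^ 2) := by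
    rw [← sum_flip, binomialProductPoly, eval_finsetSum, mul_sum, mul_sum]
    refine sum_congr rfl fun m hm => ?_
    have hmn : m ≤ n := Nat.lt_succ_iff.1 (mem_range.1 hm)
    have hpow : p⁻¹ ^ (n - m) * (1 - p⁻¹) ^ m = p⁻¹ ^ n * (p - 1) ^ m := by
      rw [show 1 - p⁻¹ = p⁻¹ * (p - 1) by field_simp, mul_pow, ← mul_assoc, ← pow_add,
        Nat.sub_add_cancel hmn]
    rw [eval_monomial, ← laguerre_norm_mul_choose_sq ha hmn, Nat.sub_sub_self hmn,
      Nat.choose_symm hmn, hpow, sub_sq_comm 1 p, pow_right_comm (p - 1)]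
    ring
  rw [laplaceFunctional_eq_rpow_mul_comp a hp, pow_comp, scaledLaguerre_comp_C_mul_X,
    laplaceFunctional_one_sum_smul_scaledLaguerre_sq ha, hexp]
  linear_combination p ^ (-(a + 1)) * hsum

theorem hasDerivAt_rpow_mul_eval_one_sub_sq (r : ℝ) (hp : p ≠ 0) (q : ℝ[X]) :
    HasDerivAt (fun p => p ^ r * q.eval ((1 - p) ^ 2))
      (p ^ (r - 1) * (r * q.eval ((1 - p) ^ 2) -
        2 * p * (1 - p) * (derivative q).eval ((1 - p) ^ 2))) p := by
  have hsq : HasDerivAt (fun p : ℝ => (1 - p) ^ 2) (-(2 * (1 - p))) p := by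
    simpa using ((hasDerivAt_id p).const_sub 1).fun_pow 2
  have hq : HasDerivAt (fun p => q.eval ((1 - p) ^ 2)) _ p := (q.hasDerivAt _).comp p hsq
  refine ((hasDerivAt_rpow_const (Or.inl hp)).fun_mul hq).congr_deriv ?_
  rw [rpow_sub_one hp]
  field_simp
  ring

theorem laplaceFunctional_X_mul_scaledLaguerre_sq (ha : -1 < a) (hp : 0 < p) (n : ℕ) :
    Gamma (n + a + 1) / n.factorial * laplaceFunctional a p (X * scaledLaguerre a n ^ 2) =
      p ^ (-(2 * n + a + 2)) *
        ((derivative (binomialProductPoly (n + 1) (n + a + 1))).eval ((1 - p) ^ 2) -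
          p ^ 2 * (derivative (binomialProductPoly n (n + a))).eval ((1 - p) ^ 2)) := by
  have hleft := (hasDerivAt_laplaceFunctional ha hp (scaledLaguerre a n ^ 2)).const_mul
    (Gamma (n + a + 1) / n.factorial)
  have hright := hasDerivAt_rpow_mul_eval_one_sub_sq (-(2 * n + a + 1)) hp.ne'
    (binomialProductPoly n (n + a))
  have heq : (fun p => Gamma (n + a + 1) / n.factorial *
      laplaceFunctional a p (scaledLaguerre a n ^ 2)) =ᶠ[nhds p]
      fun p => p ^ (-(2 * n + a + 1)) * (binomialProductPoly n (n + a)).eval ((1 - p) ^ 2) := by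
    filter_upwards [lt_mem_nhds hp] with r hr using laplaceFunctional_scaledLaguerre_sq ha hr n
  have hderiv := hleft.unique (hright.congr_of_eventuallyEq heq)
  rw [show -(2 * n + a + 1) - 1 = -(2 * n + a + 2) by ring] at hderiv
  rw [derivative_binomialProductPoly_succ]
  simp only [eval_add, eval_mul, eval_sub, eval_C, eval_X, eval_one]
  linear_combination -hderiv

/-- The polynomial part of the density: `rhoLUE a N t` is this polynomial times the weight
`t ^ a e ^ (-t)`. -/
noncomputable def densityPoly (a : ℝ) (N : ℕ) : ℝ[X] :=
  ∑ n ∈ range N, (Gamma (n + a + 1) / n.factorial) • scaledLaguerre a n ^ 2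

theorem laplaceFunctional_X_mul_densityPoly (ha : -1 < a) (hp : 0 < p) (N : ℕ) :
    laplaceFunctional a p (X * densityPoly a N) =
      p ^ (-(2 * N + a)) * (derivative (binomialProductPoly N (N + a))).eval ((1 - p) ^ 2) := by
  induction N with
  | zero => simp [densityPoly, binomialProductPoly]
  | succ N ih =>
    have hexp : p ^ (-(2 * N + a)) = p ^ (-(2 * N + a + 2)) * p ^ 2 := by
      rw [← rpow_add_natCast hp.ne']
      push_cast
      ring_nf
    rw [densityPoly, sum_range_succ, ← densityPoly, mul_add, map_add, ih, mul_smul_comm, map_smul,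
      smul_eq_mul, laplaceFunctional_X_mul_scaledLaguerre_sq ha hp, hexp]
    push_cast
    rw [show 2 * ((N : ℝ) + 1) + a = 2 * N + a + 2 by ring, add_right_comm (N : ℝ) 1 a]
    ring

theorem iteratedDeriv_exp_neg_mul_rpow (ha : -1 < a) (n : ℕ) {x : ℝ} (hx : 0 < x) :
    iteratedDeriv n (fun t => exp (-t) * t ^ (n + a)) x =
      exp (-x) * x ^ a * (Gamma (n + a + 1) * (scaledLaguerre a n).eval x) := by
  have hexp (k : ℕ) : iteratedDeriv k (fun t => exp (-t)) x = (-1) ^ k * exp (-x) := by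
    simpa using congrFun (iteratedDeriv_exp_const_mul k (-1)) x
  have hleibniz := iteratedDeriv_fun_mul (n := n) (x := x) (f := fun t => exp (-t))
    (g := fun t => t ^ (n + a)) (by fun_prop) (contDiffAt_rpow_const_of_ne hx.ne')
  rw [hleibniz, eval_eq_sum_range' (Nat.lt_succ_of_le (natDegree_scaledLaguerre_le a n)),
    mul_sum, mul_sum]
  refine sum_congr rfl fun k hk => ?_
  obtain ⟨m, rfl⟩ := Nat.exists_eq_add_of_le (Nat.lt_succ_iff.1 (mem_range.1 hk))
  have hk' : -1 < a + k := by linarith [(Nat.cast_nonneg k : (0 : ℝ) ≤ k)]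
  have hΓ := (Gamma_add_natCast_add_one_pos ha k).ne'
  rw [hexp, iteratedDeriv_eq_iterate, iter_deriv_rpow_const, Nat.add_sub_cancel_left,
    descPochhammer_eval_eq_factorial_mul_ringChoose, coeff_scaledLaguerre,
    show ((k + m : ℕ) : ℝ) + a = a + k + m by push_cast; ring,
    Gamma_add_natCast_add_one_eq hk', add_sub_cancel_right, rpow_add hx, rpow_natCast]
  field_simp

theorem factorial_mul_lagL (ha : -1 < a) (n : ℕ) {x : ℝ} (hx : 0 < x) :
    n.factorial * lagL a n x = Gamma (n + a + 1) * (scaledLaguerre a n).eval x := by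
  have hxa := (rpow_pos_of_pos hx a).ne'
  rw [lagL, iteratedDeriv_exp_neg_mul_rpow ha n hx, rpow_neg hx.le, exp_neg]
  field_simp

theorem rhoLUE_eq_weight_mul_eval (ha : -1 < a) (N : ℕ) {t : ℝ} (ht : 0 < t) :
    rhoLUE a N t = t ^ a * exp (-t) * (densityPoly a N).eval t := by
  rw [rhoLUE, densityPoly, eval_finsetSum, mul_sum]
  refine sum_congr rfl fun n _ => ?_
  have hΓ := (Gamma_add_natCast_add_one_pos ha n).ne'
  have hsign : ((-1 : ℝ) ^ n) ^ 2 = 1 := by simp [← pow_mul']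
  rw [add_comm a] at hΓ
  rw [psiL, hL, Gamma_nat_eq_factorial, mul_pow, sq_sqrt (by positivity),
    mul_right_comm (n.factorial : ℝ), factorial_mul_lagL ha n ht, mul_pow, hsign, eval_smul,
    eval_pow, smul_eq_mul]
  field_simp

end Laguerre

theorem lue_density_laplace_transform (a : ℝ) (ha : -1 < a) (N : ℕ) (hN : 1 ≤ N)
    (s : ℝ) (hs : s < 1) :
    ∫ t in Set.Ioi (0 : ℝ), t * rhoLUE a N t * Real.exp (s * t) =
      (N * (N + a) / (1 - s) ^ (2 * (N : ℝ) + a)) *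
        hypF (N - 1) (-(N : ℝ) + 1 - a) 2 (s ^ 2) := by
  have hp : 0 < 1 - s := sub_pos.2 hs
  have hintegrand : Set.EqOn (fun t => t * rhoLUE a N t * exp (s * t))
      (fun t => t ^ a * exp (-((1 - s) * t)) * (X * densityPoly a N).eval t) (Set.Ioi 0) := by
    intro t ht
    beta_reduce
    rw [rhoLUE_eq_weight_mul_eval ha N ht, show -((1 - s) * t) = -t + s * t by ring, exp_add,
      eval_mul, eval_X]
    ring
  obtain ⟨n, rfl⟩ := Nat.exists_eq_add_of_le' hN
  rw [setIntegral_congr_fun measurableSet_Ioi hintegrand, integral_rpow_mul_exp_mul_eval ha hp,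
    laplaceFunctional_X_mul_densityPoly ha hp, sub_sub_cancel,
    eval_derivative_binomialProductPoly_succ, rpow_neg hp.le, Nat.add_sub_cancel,
    show 1 - ((n + 1 : ℕ) + a) = -((n + 1 : ℕ) : ℝ) + 1 - a by ring]
  push_cast
  ring
end

section
/- The diagonal Jacobi Christoffel–Darboux kernel with weight x^a(1-x)^b on (0,1) satisfies the differential identity (d/ds)( s(1-s) K_N^{(J)}(s,s) ) = -((2N+a+b)/h_{N-1}^{(J)}) s^a (1-s)^b p_N^{(J)}(s) p_{N-1}^{(J)}(s), where p_n^{(J)} are the monic Jacobi orthogonal polynomials with norms h_n^{(J)}. -/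
open Real MeasureTheory Finset Polynomial

/-!
The Jacobi weight `w` satisfies the Pearson equation `(σ w)' = τ w` with `σ = x (1 - x)` and
`τ = (a + 1) (1 - x) - (b + 1) x`, so `(σ w f)' = w D f` with `D f = σ f' + τ f`, and `w D f` has
integral zero. Splitting `τ` in halves, `A f = σ f' + τ f / 2` satisfies
`D (f g) = A f * g + f * A g`, hence is antisymmetric for the inner product of `w`; it raises
degrees by one. Expanding `∑ j ≤ N, p j * A (p j) / h j` in the products `p j * p k` gives an
antisymmetric coefficient matrix, so all terms with `j, k ≤ N` cancel, and by the degree bound only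
the product `p N * p (N + 1)` survives.
-/

theorem two_mul_sum_sum_eq_zero_of_antisymm {ι R : Type*} [NonAssocRing R] (s : Finset ι)
    (F : ι → ι → R) (hF : ∀ i j, F i j = -F j i) : 2 * ∑ i ∈ s, ∑ j ∈ s, F i j = 0 := by
  have hneg : ∑ i ∈ s, ∑ j ∈ s, F i j = -∑ i ∈ s, ∑ j ∈ s, F i j := by
    conv_lhs => rw [sum_comm]
    simp only [← sum_neg_distrib, ← hF]
  rw [two_mul, ← eq_neg_iff_add_eq_zero]
  exact hneg

/-! ### Monic orthogonal polynomials -/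

section Orthogonal

variable {K : Type*} [Field K]

/-- `p` is the sequence of monic orthogonal polynomials of the moment functional `L`, with squared
norms `h`. The norms are allowed to vanish. -/
structure IsMonicOrthogonal (L : K[X] →ₗ[K] K) (p : ℕ → K[X]) (h : ℕ → K) : Prop where
  monic : ∀ n, (p n).Monic
  natDegree_eq : ∀ n, (p n).natDegree = n
  apply_mul : ∀ m n, L (p m * p n) = if m = n then h n else 0

/-- The polynomial part `∑ j < N, p j ^ 2 / h j` of the Christoffel–Darboux kernel on the
diagonal; the kernel itself is its product with the weight. -/
noncomputable def diagonalKernel (p : ℕ → K[X]) (h : ℕ → K) (N : ℕ) : K[X] :=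
  ∑ j ∈ range N, C (h j)⁻¹ * p j ^ 2

namespace IsMonicOrthogonal

variable {L : K[X] →ₗ[K] K} {p : ℕ → K[X]} {h : ℕ → K}

theorem coeff_self (hp : IsMonicOrthogonal L p h) (n : ℕ) : (p n).coeff n = 1 := by
  simpa only [hp.natDegree_eq n] using (hp.monic n).coeff_natDegree

theorem coeff_eq_zero_of_lt (hp : IsMonicOrthogonal L p h) {m n : ℕ} (hmn : m < n) :
    (p m).coeff n = 0 :=
  coeff_eq_zero_of_natDegree_lt ((hp.natDegree_eq m).trans_lt hmn)

theorem exists_eq_sum_of_degree_lt (hp : IsMonicOrthogonal L p h) {n : ℕ} {q : K[X]}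
    (hq : q.degree < n) : ∃ c : ℕ → K, q = ∑ k ∈ range n, C (c k) * p k := by
  let S : Polynomial.Sequence K :=
    ⟨p, fun i => by rw [degree_eq_natDegree (hp.monic i).ne_zero, hp.natDegree_eq]⟩
  have hspan : q ∈ Submodule.span K (p '' (range n : Set ℕ)) := by
    rw [coe_range, S.span_degreeLT fun i _ => (hp.monic i).leadingCoeff.symm ▸ isUnit_one]
    exact mem_degreeLT.mpr hq
  obtain ⟨c, hc⟩ := (Submodule.mem_span_image_finset_iff_exists_fun' K).mp hspan
  exact ⟨c, by simpa only [smul_eq_C_mul] using hc.symm⟩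

theorem apply_sum_mul (hp : IsMonicOrthogonal L p h) (c : ℕ → K) {n k : ℕ} (hk : k < n) :
    L ((∑ j ∈ range n, C (c j) * p j) * p k) = c k * h k := by
  simp [sum_mul, ← smul_eq_C_mul, hp.apply_mul, hk]

theorem eq_sum_of_degree_lt (hp : IsMonicOrthogonal L p h) (h0 : ∀ n, h n ≠ 0) {n : ℕ}
    {q : K[X]} (hq : q.degree < n) :
    q = ∑ k ∈ range n, C (L (q * p k) / h k) * p k := by
  obtain ⟨c, hc⟩ := hp.exists_eq_sum_of_degree_lt hq
  refine hc.trans (sum_congr rfl fun k hk => ?_)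
  rw [hc, hp.apply_sum_mul c (mem_range.mp hk), mul_div_cancel_right₀ _ (h0 k)]

theorem apply_mul_of_natDegree_le (hp : IsMonicOrthogonal L p h) {n : ℕ} {q : K[X]}
    (hq : q.natDegree ≤ n) : L (q * p n) = q.coeff n * h n := by
  obtain ⟨c, rfl⟩ := hp.exists_eq_sum_of_degree_lt
    (degree_le_natDegree.trans_lt (Nat.cast_lt.mpr (Nat.lt_succ_of_le hq)))
  rw [hp.apply_sum_mul c n.lt_succ_self, sum_range_succ, coeff_add, coeff_C_mul, hp.coeff_self,
    mul_one, finsetSum_coeff, sum_eq_zero, zero_add]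
  intro k hk
  rw [coeff_C_mul, hp.coeff_eq_zero_of_lt (mem_range.mp hk), mul_zero]

theorem two_mul_sum_mul_of_antisymm (hp : IsMonicOrthogonal L p h) (h0 : ∀ n, h n ≠ 0)
    {q : ℕ → K[X]} (hq : ∀ n, (q n).natDegree ≤ n + 1)
    (hanti : ∀ m n, L (q m * p n) = -L (q n * p m)) (N : ℕ) :
    2 * ∑ j ∈ range (N + 1), C (h j)⁻¹ * (p j * q j) =
      C (2 * (q N).coeff (N + 1) / h N) * (p (N + 1) * p N) := by
  let M (j k : ℕ) : K := L (q j * p k) / (h j * h k)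
  have hM_anti (j k : ℕ) : M j k = -M k j := by
    simp only [M, hanti j k, neg_div, mul_comm (h j)]
  have hM_last {j : ℕ} (hj : j ≤ N) : M j (N + 1) = (q j).coeff (N + 1) / h j := by
    simp only [M]
    rw [hp.apply_mul_of_natDegree_le ((hq j).trans (by lia)), mul_div_mul_right _ _ (h0 _)]
  have hexpand (j : ℕ) (hj : j ∈ range (N + 1)) : C (h j)⁻¹ * (p j * q j) =
      ∑ k ∈ range (N + 1), C (M j k) * (p j * p k) + C (M j (N + 1)) * (p j * p (N + 1)) := by
    have hdeg : (q j).degree < ((N + 2 : ℕ) : WithBot ℕ) := degree_le_natDegree.trans_lt <|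
      Nat.cast_lt.mpr <| (hq j).trans_lt <| Nat.succ_lt_succ (mem_range.mp hj)
    rw [← sum_range_succ (fun k => C (M j k) * (p j * p k))]
    conv_lhs => rw [hp.eq_sum_of_degree_lt h0 hdeg]
    rw [mul_sum, mul_sum]
    refine sum_congr rfl fun k _ => ?_
    rw [show M j k = (h j)⁻¹ * (L (q j * p k) / h k) by simp only [M]; field_simp, C_mul]
    ring
  have hcancel : 2 * ∑ j ∈ range (N + 1), ∑ k ∈ range (N + 1), C (M j k) * (p j * p k) = 0 :=
    two_mul_sum_sum_eq_zero_of_antisymm _ _ fun j k => by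
      rw [hM_anti, C_neg, neg_mul, mul_comm (p j)]
  have hsurvivor : ∑ j ∈ range (N + 1), C (M j (N + 1)) * (p j * p (N + 1)) =
      C ((q N).coeff (N + 1) / h N) * (p N * p (N + 1)) := by
    rw [sum_range_succ, hM_last le_rfl, sum_eq_zero, zero_add]
    intro j hj
    have hjN := mem_range.mp hj
    rw [hM_last hjN.le, coeff_eq_zero_of_natDegree_lt ((hq j).trans_lt (by lia)), zero_div,
      C_0, zero_mul]
  rw [sum_congr rfl hexpand, sum_add_distrib, mul_add, hcancel, hsurvivor, mul_div_assoc,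
    C_mul, C_ofNat]
  ring

end IsMonicOrthogonal

end Orthogonal

/-! ### Pearson operators -/

section Pearson

/-- The first-order operator `f ↦ σ f' + τ f`. When a weight `w` satisfies the Pearson equation
`(σ w)' = τ w`, it is `f ↦ (σ w f)' / w`. -/
noncomputable def pearsonOperator {R : Type*} [CommRing R] (σ τ : R[X]) : R[X] →ₗ[R] R[X] :=
  LinearMap.mulLeft R σ ∘ₗ derivative + LinearMap.mulLeft R τ

section CommRing

variable {R : Type*} [CommRing R] {σ τ : R[X]}

theorem pearsonOperator_apply (σ τ f : R[X]) :
    pearsonOperator σ τ f = σ * derivative f + τ * f := rfl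

theorem pearsonOperator_mul (σ τ₁ τ₂ f g : R[X]) :
    pearsonOperator σ (τ₁ + τ₂) (f * g) =
      pearsonOperator σ τ₁ f * g + f * pearsonOperator σ τ₂ g := by
  simp only [pearsonOperator_apply, derivative_mul]
  ring

theorem natDegree_pearsonOperator_le (hσ : σ.natDegree ≤ 2) (hτ : τ.natDegree ≤ 1) (f : R[X]) :
    (pearsonOperator σ τ f).natDegree ≤ f.natDegree + 1 := by
  rw [pearsonOperator_apply]
  refine natDegree_add_le_of_degree_le ?_ (add_comm 1 _ ▸ natDegree_mul_le_of_le hτ le_rfl)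
  by_cases hf : f.natDegree = 0
  · simp [derivative_of_natDegree_zero hf]
  · exact (natDegree_mul_le_of_le hσ (natDegree_derivative_le f)).trans (by lia)

theorem coeff_pearsonOperator (hσ : σ.natDegree ≤ 2) (hτ : τ.natDegree ≤ 1) {f : R[X]} {n : ℕ}
    (hf : f.natDegree ≤ n) :
    (pearsonOperator σ τ f).coeff (n + 1) = (n * σ.coeff 2 + τ.coeff 1) * f.coeff n := by
  have hτf : (τ * f).coeff (n + 1) = τ.coeff 1 * f.coeff n := by
    rw [add_comm, coeff_mul_add_eq_of_natDegree_le hτ hf]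
  have hσf : (σ * derivative f).coeff (n + 1) = n * σ.coeff 2 * f.coeff n := by
    cases n with
    | zero => simp [derivative_of_natDegree_zero (Nat.le_zero.mp hf)]
    | succ n =>
      have hf' : (derivative f).natDegree ≤ n := (natDegree_derivative_le f).trans (by lia)
      rw [show n + 1 + 1 = 2 + n by lia, coeff_mul_add_eq_of_natDegree_le hσ hf',
        coeff_derivative]
      push_cast
      ring
  rw [pearsonOperator_apply, coeff_add, hσf, hτf]
  ring

end CommRing

theorem IsMonicOrthogonal.pearsonOperator_diagonalKernel {K : Type*} [Field K] [NeZero (2 : K)]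
    {L : K[X] →ₗ[K] K} {p : ℕ → K[X]} {h : ℕ → K} {σ τ : K[X]}
    (hp : IsMonicOrthogonal L p h) (h0 : ∀ n, h n ≠ 0) (hσ : σ.natDegree ≤ 2)
    (hτ : τ.natDegree ≤ 1) (hL : ∀ f, L (pearsonOperator σ τ f) = 0) (N : ℕ) :
    pearsonOperator σ τ (diagonalKernel p h (N + 1)) =
      C ((2 * N * σ.coeff 2 + τ.coeff 1) / h N) * (p (N + 1) * p N) := by
  have h2 : (2 : K) ≠ 0 := NeZero.ne 2
  let A : K[X] →ₗ[K] K[X] := pearsonOperator σ (C 2⁻¹ * τ)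
  have hhalf : (C 2⁻¹ * τ).natDegree ≤ 1 := (natDegree_C_mul_le _ _).trans hτ
  have hleibniz (f g : K[X]) : pearsonOperator σ τ (f * g) = A f * g + f * A g := by
    have hτ_halves : τ = C 2⁻¹ * τ + C 2⁻¹ * τ := by
      rw [← add_mul, ← C_add, ← two_mul, mul_inv_cancel₀ h2, C_1, one_mul]
    conv_lhs => rw [hτ_halves]
    exact pearsonOperator_mul _ _ _ _ _
  have hanti (m n : ℕ) : L (A (p m) * p n) = -L (A (p n) * p m) := by
    rw [eq_neg_iff_add_eq_zero, ← map_add, mul_comm (A (p n)), ← hleibniz, hL]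
  have hdeg (n : ℕ) : (A (p n)).natDegree ≤ n + 1 := by
    simpa only [hp.natDegree_eq] using natDegree_pearsonOperator_le hσ hhalf (p n)
  have hcoeff : 2 * (A (p N)).coeff (N + 1) = 2 * N * σ.coeff 2 + τ.coeff 1 := by
    rw [coeff_pearsonOperator hσ hhalf (hp.natDegree_eq N).le, hp.coeff_self, coeff_C_mul]
    field_simp
  rw [← hcoeff, ← hp.two_mul_sum_mul_of_antisymm h0 hdeg hanti, diagonalKernel, map_sum, mul_sum]
  refine sum_congr rfl fun j _ => ?_
  rw [← smul_eq_C_mul, map_smul, pow_two, hleibniz, smul_eq_C_mul]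
  ring

theorem hasDerivAt_mul_eval_of_pearson {𝕜 : Type*} [NontriviallyNormedField 𝕜] {σ τ : 𝕜[X]}
    {W : 𝕜 → 𝕜} {w x : 𝕜} (hW : HasDerivAt W (w * τ.eval x) x) (hWx : W x = w * σ.eval x)
    (f : 𝕜[X]) :
    HasDerivAt (fun y => W y * f.eval y) (w * (pearsonOperator σ τ f).eval x) x := by
  refine (hW.fun_mul (f.hasDerivAt x)).congr_deriv ?_
  rw [hWx, pearsonOperator_apply, eval_add, eval_mul, eval_mul]
  ring

end Pearson

/-! ### Moment functionals of weights -/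

section Weight

variable {w : ℝ → ℝ} {s : Set ℝ}

/-- The moment functional `f ↦ ∫ x in s, w x * f x` of a weight `w` on `s` all of whose polynomial
moments exist. -/
noncomputable def momentFunctional (w : ℝ → ℝ) (s : Set ℝ)
    (hw : ∀ f : ℝ[X], IntegrableOn (fun x => w x * f.eval x) s) : ℝ[X] →ₗ[ℝ] ℝ where
  toFun f := ∫ x in s, w x * f.eval x
  map_add' f g := by simp only [eval_add, mul_add, integral_add (hw f) (hw g)]
  map_smul' c f := by
    simp only [eval_smul, smul_eq_mul, mul_left_comm _ c, integral_const_mul, RingHom.id_apply]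

theorem momentFunctional_apply (hw : ∀ f : ℝ[X], IntegrableOn (fun x => w x * f.eval x) s)
    (f : ℝ[X]) : momentFunctional w s hw f = ∫ x in s, w x * f.eval x := rfl

theorem momentFunctional_mul_self_pos
    (hw : ∀ f : ℝ[X], IntegrableOn (fun x => w x * f.eval x) s) (hs : MeasurableSet s)
    (hvol : volume s ≠ 0) (hpos : ∀ x ∈ s, 0 < w x) {f : ℝ[X]} (hf : f ≠ 0) :
    0 < momentFunctional w s hw (f * f) := by
  have hnonneg : 0 ≤ᵐ[volume.restrict s] fun x => w x * (f * f).eval x :=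
    ae_restrict_of_forall_mem hs fun x hx => by
      simp only [Pi.zero_apply, eval_mul]
      exact mul_nonneg (hpos x hx).le (mul_self_nonneg _)
  have hsupport : s \ {x | f.IsRoot x} ⊆
      Function.support (fun x => w x * (f * f).eval x) ∩ s := fun x ⟨hxs, hroot⟩ => by
    have hroot : f.eval x ≠ 0 := hroot
    exact ⟨by simp [(hpos x hxs).ne', hroot], hxs⟩
  rw [momentFunctional_apply, setIntegral_pos_iff_support_of_nonneg_ae hnonneg (hw _)]
  calc 0 < volume s := pos_iff_ne_zero.mpr hvol
    _ = volume (s \ {x | f.IsRoot x}) :=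
        (measure_sdiff_null ((finite_setOfPred_isRoot hf).measure_zero _)).symm
    _ ≤ _ := measure_mono hsupport

end Weight

/-! ### The Jacobi weight -/

section Jacobi

/-- The Jacobi weight `x ^ a * (1 - x) ^ b`, of interest on `(0, 1)`. -/
noncomputable def jacobiWeight (a b x : ℝ) : ℝ := x ^ a * (1 - x) ^ b

/-- The coefficient `τ` in the Pearson equation `(x (1 - x) w)' = τ w` of the Jacobi weight `w`. -/
noncomputable def jacobiTau (a b : ℝ) : ℝ[X] := C (a + 1) * (1 - X) - C (b + 1) * X

variable {a b : ℝ}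

theorem natDegree_X_mul_one_sub_X_le : (X * (1 - X) : ℝ[X]).natDegree ≤ 2 := by
  compute_degree

theorem coeff_two_X_mul_one_sub_X : (X * (1 - X) : ℝ[X]).coeff 2 = -1 := by
  simp [coeff_one, coeff_X]

theorem natDegree_jacobiTau_le (a b : ℝ) : (jacobiTau a b).natDegree ≤ 1 := by
  unfold jacobiTau
  compute_degree

theorem coeff_one_jacobiTau (a b : ℝ) : (jacobiTau a b).coeff 1 = -(a + b + 2) := by
  simp only [jacobiTau, coeff_sub, coeff_C_mul, coeff_one, coeff_X_one, one_ne_zero, if_false]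
  ring

theorem jacobiWeight_pos (a b : ℝ) {x : ℝ} (hx : x ∈ Set.Ioo (0 : ℝ) 1) :
    0 < jacobiWeight a b x :=
  mul_pos (rpow_pos_of_pos hx.1 a) (rpow_pos_of_pos (sub_pos.mpr hx.2) b)

theorem rpow_add_one_of_ne_neg_one {c : ℝ} (hc : c ≠ -1) (x : ℝ) : x ^ (c + 1) = x ^ c * x := by
  rcases eq_or_ne x 0 with rfl | hx
  · rw [zero_rpow (by rwa [ne_eq, add_eq_zero_iff_eq_neg]), mul_zero]
  · exact rpow_add_one hx c

theorem jacobiWeight_add_one (ha : a ≠ -1) (hb : b ≠ -1) (x : ℝ) :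
    jacobiWeight (a + 1) (b + 1) x = jacobiWeight a b x * (X * (1 - X) : ℝ[X]).eval x := by
  simp only [jacobiWeight, rpow_add_one_of_ne_neg_one ha, rpow_add_one_of_ne_neg_one hb, eval_mul,
    eval_sub, eval_one, eval_X]
  ring

theorem continuous_jacobiWeight (ha : 0 ≤ a) (hb : 0 ≤ b) : Continuous (jacobiWeight a b) :=
  (continuous_id.rpow_const fun _ => Or.inr ha).mul
    ((continuous_const.sub continuous_id).rpow_const fun _ => Or.inr hb)

theorem hasDerivAt_jacobiWeight_add_one (a b : ℝ) {x : ℝ} (hx : x ∈ Set.Ioo (0 : ℝ) 1) :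
    HasDerivAt (jacobiWeight (a + 1) (b + 1)) (jacobiWeight a b x * (jacobiTau a b).eval x) x := by
  have hx0 : x ≠ 0 := hx.1.ne'
  have hx1 : 1 - x ≠ 0 := (sub_pos.mpr hx.2).ne'
  have hleft : HasDerivAt (fun y : ℝ => y ^ (a + 1)) ((a + 1) * x ^ a) x := by
    simpa only [add_sub_cancel_right] using hasDerivAt_rpow_const (p := a + 1) (Or.inl hx0)
  have hright : HasDerivAt (fun y : ℝ => (1 - y) ^ (b + 1)) (-1 * (b + 1) * (1 - x) ^ b) x := by
    simpa only [add_sub_cancel_right] using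
      ((hasDerivAt_id' x).const_sub 1).rpow_const (p := b + 1) (Or.inl hx1)
  refine (hleft.fun_mul hright).congr_deriv ?_
  rw [rpow_add_one hx0, rpow_add_one hx1, jacobiWeight, jacobiTau]
  simp only [eval_sub, eval_mul, eval_C, eval_one, eval_X]
  ring

theorem intervalIntegrable_jacobiWeight (ha : -1 < a) (hb : -1 < b) :
    IntervalIntegrable (jacobiWeight a b) volume 0 1 := by
  have hbeta := Complex.betaIntegral_convergent (u := ((a + 1 : ℝ) : ℂ)) (v := ((b + 1 : ℝ) : ℂ))
    (by rw [Complex.ofReal_re]; linarith) (by rw [Complex.ofReal_re]; linarith)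
  rw [intervalIntegrable_iff_integrableOn_Ioo_of_le zero_le_one] at hbeta ⊢
  refine IntegrableOn.congr_fun hbeta.norm (fun x hx => ?_) measurableSet_Ioo
  have hx1 : 0 < 1 - x := sub_pos.mpr hx.2
  rw [norm_mul, ← Complex.ofReal_one, ← Complex.ofReal_sub, ← Complex.ofReal_sub,
    ← Complex.ofReal_sub, Complex.norm_cpow_eq_rpow_re_of_pos hx.1,
    Complex.norm_cpow_eq_rpow_re_of_pos hx1, Complex.ofReal_re, Complex.ofReal_re,
    add_sub_cancel_right, add_sub_cancel_right, jacobiWeight]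

theorem intervalIntegrable_jacobiWeight_mul_eval (ha : -1 < a) (hb : -1 < b) (f : ℝ[X]) :
    IntervalIntegrable (fun x => jacobiWeight a b x * f.eval x) volume 0 1 :=
  (intervalIntegrable_jacobiWeight ha hb).mul_continuousOn f.continuous.continuousOn

theorem integrableOn_jacobiWeight_mul_eval (ha : -1 < a) (hb : -1 < b) (f : ℝ[X]) :
    IntegrableOn (fun x => jacobiWeight a b x * f.eval x) (Set.Ioo 0 1) :=
  (intervalIntegrable_iff_integrableOn_Ioo_of_le zero_le_one).mp
    (intervalIntegrable_jacobiWeight_mul_eval ha hb f)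

/-- Integration against the Jacobi weight on `(0, 1)`. -/
noncomputable def jacobiFunctional (ha : -1 < a) (hb : -1 < b) : ℝ[X] →ₗ[ℝ] ℝ :=
  momentFunctional (jacobiWeight a b) (Set.Ioo 0 1) (integrableOn_jacobiWeight_mul_eval ha hb)

theorem hasDerivAt_jacobiWeight_add_one_mul_eval (ha : -1 < a) (hb : -1 < b) (f : ℝ[X]) {x : ℝ}
    (hx : x ∈ Set.Ioo (0 : ℝ) 1) :
    HasDerivAt (fun y => jacobiWeight (a + 1) (b + 1) y * f.eval y)
      (jacobiWeight a b x * (pearsonOperator (X * (1 - X)) (jacobiTau a b) f).eval x) x :=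
  hasDerivAt_mul_eval_of_pearson (hasDerivAt_jacobiWeight_add_one a b hx)
    (jacobiWeight_add_one ha.ne' hb.ne' x) f

theorem jacobiFunctional_pearsonOperator (ha : -1 < a) (hb : -1 < b) (f : ℝ[X]) :
    jacobiFunctional ha hb (pearsonOperator (X * (1 - X)) (jacobiTau a b) f) = 0 := by
  have hcont : Continuous fun y => jacobiWeight (a + 1) (b + 1) y * f.eval y :=
    (continuous_jacobiWeight (by linarith) (by linarith)).mul f.continuous
  rw [jacobiFunctional, momentFunctional_apply, ← integral_Ioc_eq_integral_Ioo,
    ← intervalIntegral.integral_of_le zero_le_one,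
    intervalIntegral.integral_eq_sub_of_hasDerivAt_of_le zero_le_one hcont.continuousOn
      (fun x hx => hasDerivAt_jacobiWeight_add_one_mul_eval ha hb f hx)
      (intervalIntegrable_jacobiWeight_mul_eval ha hb _),
    jacobiWeight_add_one ha.ne' hb.ne', jacobiWeight_add_one ha.ne' hb.ne']
  simp

theorem jacobiFunctional_mul_self_pos (ha : -1 < a) (hb : -1 < b) {f : ℝ[X]} (hf : f ≠ 0) :
    0 < jacobiFunctional ha hb (f * f) :=
  momentFunctional_mul_self_pos _ measurableSet_Ioo (by simp) (fun _ => jacobiWeight_pos a b) hf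

theorem IsMonicOrthogonal.jacobi_norm_ne_zero {ha : -1 < a} {hb : -1 < b} {p : ℕ → ℝ[X]}
    {h : ℕ → ℝ} (hp : IsMonicOrthogonal (jacobiFunctional ha hb) p h) (n : ℕ) : h n ≠ 0 := by
  have hpos := jacobiFunctional_mul_self_pos ha hb (hp.monic n).ne_zero
  rw [hp.apply_mul, if_pos rfl] at hpos
  exact hpos.ne'

theorem IsMonicOrthogonal.hasDerivAt_jacobi_diagonalKernel {ha : -1 < a} {hb : -1 < b}
    {p : ℕ → ℝ[X]} {h : ℕ → ℝ} (hp : IsMonicOrthogonal (jacobiFunctional ha hb) p h) (N : ℕ)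
    {s : ℝ} (hs : s ∈ Set.Ioo (0 : ℝ) 1) :
    HasDerivAt (fun x => jacobiWeight (a + 1) (b + 1) x * (diagonalKernel p h (N + 1)).eval x)
      (jacobiWeight a b s *
        (-((2 * (N + 1) + a + b) / h N) * ((p (N + 1)).eval s * (p N).eval s))) s := by
  convert hasDerivAt_jacobiWeight_add_one_mul_eval ha hb _ hs using 2
  rw [hp.pearsonOperator_diagonalKernel hp.jacobi_norm_ne_zero natDegree_X_mul_one_sub_X_le
      (natDegree_jacobiTau_le a b) (jacobiFunctional_pearsonOperator ha hb),
    coeff_two_X_mul_one_sub_X, coeff_one_jacobiTau, eval_mul, eval_C, eval_mul]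
  ring

end Jacobi

theorem jacobi_diagonal_kernel_derivative (a b : ℝ) (ha : -1 < a) (hb : -1 < b)
    (p : ℕ → Polynomial ℝ)
    (hmonic : ∀ n, (p n).Monic) (hdeg : ∀ n, (p n).natDegree = n)
    (h : ℕ → ℝ)
    (horth : ∀ m n, ∫ x in Set.Ioo (0:ℝ) 1,
      x ^ a * (1 - x) ^ b * (p m).eval x * (p n).eval x =
        if m = n then h n else 0)
    (N : ℕ) (hN : 1 ≤ N) (s : ℝ) (hs : s ∈ Set.Ioo (0:ℝ) 1) :
    deriv (fun s' => s' * (1 - s') *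
        (s' ^ a * (1 - s') ^ b * ∑ j ∈ Finset.range N, (p j).eval s' ^ 2 / h j)) s =
      -((2 * N + a + b) / h (N - 1)) * s ^ a * (1 - s) ^ b *
        (p N).eval s * (p (N - 1)).eval s := by
  obtain ⟨n, rfl⟩ := Nat.exists_eq_add_of_le' hN
  have hp : IsMonicOrthogonal (jacobiFunctional ha hb) p h :=
    ⟨hmonic, hdeg, fun i j => by
      simp only [← horth i j, jacobiFunctional, momentFunctional_apply, jacobiWeight, eval_mul,
        mul_assoc]⟩
  have hkernel : (fun s' => s' * (1 - s') *
        (s' ^ a * (1 - s') ^ b * ∑ j ∈ range (n + 1), (p j).eval s' ^ 2 / h j)) =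
      fun x => jacobiWeight (a + 1) (b + 1) x * (diagonalKernel p h (n + 1)).eval x := by
    funext x
    rw [jacobiWeight_add_one ha.ne' hb.ne']
    simp only [jacobiWeight, diagonalKernel, eval_finsetSum, eval_mul, eval_C, eval_pow, eval_sub,
      eval_one, eval_X, div_eq_inv_mul]
    ring
  rw [hkernel, (hp.hasDerivAt_jacobi_diagonalKernel n hs).deriv, jacobiWeight]
  push_cast [Nat.add_sub_cancel]
  ring
end
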